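/- The metric space (𝒫, ρ) is (π/2)-geodesic: for any two orthogonal projections P, Q on H with ρ(P,Q) < π/2 there exists a geodesic path joining them, i.e., a map γ : [0, ρ(P,Q)] → 𝒫 with γ(0) = P, γ(ρ(P,Q)) = Q, and ρ(γ(s), γ(t)) = |s − t| for all s, t ∈ [0, ρ(P,Q)]. -/

import Mathlib

open ContinuousLinearMap
open scoped ENNReal

/-- `P` is an orthogonal projection: `P = P* = P²`. -/
def IsOrthogonalProjection {H : Type*} [NormedAddCommGroup H] [InnerProductSpace ℂ H]
    [CompleteSpace H] (P : H →L[ℂ] H) : Prop :=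
  IsSelfAdjoint P ∧ P * P = P

/-- A map `γ` is a piecewise `C¹`-smooth path on `[a,b]` if there is a partition
`a = t₀ < … < t_n = b` such that `γ` is `C¹`-smooth on each `[t_j, t_{j+1}]`. -/
def PiecewiseC1On {E : Type*} [NormedAddCommGroup E] [NormedSpace ℝ E]
    (γ : ℝ → E) (a b : ℝ) : Prop :=
  ∃ (n : ℕ) (t : ℕ → ℝ), t 0 = a ∧ t n = b ∧ (∀ i < n, t i < t (i + 1)) ∧
    ∀ i < n, ContDiffOn ℝ 1 γ (Set.Icc (t i) (t (i + 1)))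

/-- The length (inner) metric `ρ` on the set of orthogonal projections: the infimum of the
lengths (total variations) of continuous paths of orthogonal projections joining `P` to `Q`
(parametrized by `[0,1]`), with value `∞` if there is no such path. -/
noncomputable def projLengthMetric {H : Type*} [NormedAddCommGroup H] [InnerProductSpace ℂ H]
    [CompleteSpace H] (P Q : H →L[ℂ] H) : ℝ≥0∞ :=
  ⨅ (γ : ℝ → (H →L[ℂ] H)) (_ : ContinuousOn γ (Set.Icc (0:ℝ) 1))
    (_ : ∀ t ∈ Set.Icc (0:ℝ) 1, IsOrthogonalProjection (γ t))
    (_ : γ 0 = P) (_ : γ 1 = Q), eVariationOn γ (Set.Icc (0:ℝ) 1)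

/-!
The operator-norm distance of two projections determines their length distance: if `‖P - Q‖ < 1`,
then `ρ(P, Q) = arcsin ‖P - Q‖`, and `arcsin ‖P - Q‖ ≤ ρ(P, Q)` always.

*Lower bound.* The symmetries `S = 2P - 1` and `T = 2Q - 1` are isometries, so for a unit vector `x`
the number `‖S x - T x‖` is the chord of the angle between two points of the unit sphere. The
triangle inequality for angles passes to the supremum over `x`, hence `arcsin ‖P - Q‖` satisfies
the triangle inequality. Since `arcsin r ~ r` at `0`, subdividing a path finely shows that its
length is at least the `arcsin` distance of its endpoints.

*Upper bound.* If `‖P - Q‖ < 1`, then `T S = exp (i a)` with `a` self-adjoint of norm below `π`.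
Conjugation by `S` maps `T S` to its inverse `S T`, so it maps `a` to `-a`, and therefore every
`exp (i t a) S` is again a symmetry. This path joins `S` to `T`, and its chords have norm
`2 sin (|s - t| ‖a‖ / 2)` with `‖a‖ / 2 = arcsin ‖P - Q‖`, so its length attains the lower bound
between any two of its points.
-/

open Set Filter Topology
open scoped NNReal

section ChordAngle

theorem eq_two_mul_sin_half_of_sq_eq {c x : ℝ} (hc : 0 ≤ c) (hx : 0 ≤ x) (hx' : x ≤ 2 * Real.pi)
    (h : c ^ 2 = 2 * (1 - Real.cos x)) : c = 2 * Real.sin (x / 2) := by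
  have hsin : 0 ≤ Real.sin (x / 2) :=
    Real.sin_nonneg_of_nonneg_of_le_pi (by linarith) (by linarith)
  refine (sq_eq_sq₀ hc (by positivity)).1 ?_
  rw [h, mul_pow, Real.sin_sq_eq_half_sub, mul_div_cancel₀ x two_ne_zero]
  ring

theorem half_angle_eq_arcsin {V : Type*} [NormedAddCommGroup V] [InnerProductSpace ℝ V] {x y : V}
    (hx : ‖x‖ = 1) (hy : ‖y‖ = 1) :
    InnerProductGeometry.angle x y / 2 = Real.arcsin (‖x - y‖ / 2) := by
  have h0 := InnerProductGeometry.angle_nonneg x y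
  have hpi := InnerProductGeometry.angle_le_pi x y
  have hchord : ‖x - y‖ = 2 * Real.sin (InnerProductGeometry.angle x y / 2) := by
    refine eq_two_mul_sin_half_of_sq_eq (norm_nonneg _) h0 (by linarith) ?_
    rw [norm_sub_sq_real, hx, hy, InnerProductGeometry.inner_eq_cos_angle_of_norm_eq_one hx hy]
    ring
  rw [hchord, mul_div_cancel_left₀ _ two_ne_zero, Real.arcsin_sin] <;> linarith

theorem arcsin_half_norm_sub_triangle {V : Type*} [NormedAddCommGroup V] [InnerProductSpace ℝ V]
    {x y z : V} (hx : ‖x‖ = 1) (hy : ‖y‖ = 1) (hz : ‖z‖ = 1) :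
    Real.arcsin (‖x - z‖ / 2) ≤ Real.arcsin (‖x - y‖ / 2) + Real.arcsin (‖y - z‖ / 2) := by
  rw [← half_angle_eq_arcsin hx hy, ← half_angle_eq_arcsin hy hz, ← half_angle_eq_arcsin hx hz]
  linarith [InnerProductGeometry.angle_le_angle_add_angle x y z]

end ChordAngle

section OperatorTriangle

variable {𝕜 E F : Type*} [RCLike 𝕜]

theorem arcsin_half_opNorm_sub_triangle [SeminormedAddCommGroup E] [NormedSpace 𝕜 E]
    [NormedAddCommGroup F] [InnerProductSpace 𝕜 F] {A B C : E →L[𝕜] F}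
    (hA : ∀ x, ‖A x‖ = ‖x‖) (hB : ∀ x, ‖B x‖ = ‖x‖) (hC : ∀ x, ‖C x‖ = ‖x‖) :
    Real.arcsin (‖A - C‖ / 2) ≤ Real.arcsin (‖A - B‖ / 2) + Real.arcsin (‖B - C‖ / 2) := by
  let : InnerProductSpace ℝ F := InnerProductSpace.rclikeToReal 𝕜 F
  set α := Real.arcsin (‖A - B‖ / 2)
  set β := Real.arcsin (‖B - C‖ / 2)
  have hα : 0 ≤ α := Real.arcsin_nonneg.2 (by positivity)
  have hβ : 0 ≤ β := Real.arcsin_nonneg.2 (by positivity)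
  rcases le_or_gt (Real.pi / 2) (α + β) with hαβ | hαβ
  · exact (Real.arcsin_le_pi_div_two _).trans hαβ
  have hmem : α + β ∈ Ico (-(Real.pi / 2)) (Real.pi / 2) := ⟨by linarith, hαβ⟩
  have hsin : 0 ≤ Real.sin (α + β) :=
    Real.sin_nonneg_of_nonneg_of_le_pi (by positivity) (by linarith)
  have norm_apply_sub_le (S T : E →L[𝕜] F) {x : E} (hx : ‖x‖ = 1) : ‖S x - T x‖ ≤ ‖S - T‖ := by
    simpa [hx] using (S - T).le_opNorm x
  rw [Real.arcsin_le_iff_le_sin' hmem, div_le_iff₀ two_pos]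
  refine opNorm_le_of_unit_norm (by positivity) fun x hx ↦ ?_
  rw [sub_apply, ← div_le_iff₀ two_pos, ← Real.arcsin_le_iff_le_sin' hmem]
  calc
    Real.arcsin (‖A x - C x‖ / 2)
      ≤ Real.arcsin (‖A x - B x‖ / 2) + Real.arcsin (‖B x - C x‖ / 2) :=
        arcsin_half_norm_sub_triangle ((hA x).trans hx) ((hB x).trans hx) ((hC x).trans hx)
    _ ≤ α + β := by
        unfold α β
        gcongr Real.arcsin (?_ / 2) + Real.arcsin (?_ / 2) <;> exact norm_apply_sub_le _ _ hx

theorem norm_two_mul_sub_one_sub_two_mul_sub_one {A : Type*} [NormedRing A] [NormedAlgebra ℝ A]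
    (p q : A) : ‖(2 * p - 1) - (2 * q - 1)‖ = 2 * ‖p - q‖ := by
  rw [sub_sub_sub_cancel_right, ← mul_sub, two_mul, ← two_smul ℝ, norm_smul, Real.norm_ofNat]

theorem arcsin_norm_sub_triangle_of_isStarProjection [NormedAddCommGroup E]
    [InnerProductSpace 𝕜 E] [CompleteSpace E] {P Q R : E →L[𝕜] E} (hP : IsStarProjection P)
    (hQ : IsStarProjection Q) (hR : IsStarProjection R) :
    Real.arcsin ‖P - R‖ ≤ Real.arcsin ‖P - Q‖ + Real.arcsin ‖Q - R‖ := by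
  let : NormedAlgebra ℝ (E →L[𝕜] E) := .restrictScalars ℝ 𝕜 _
  simpa only [norm_two_mul_sub_one_sub_two_mul_sub_one, mul_div_cancel_left₀ _ (two_ne_zero' ℝ)]
    using arcsin_half_opNorm_sub_triangle
      (norm_map_of_mem_unitary hP.two_mul_sub_one_mem_unitary)
      (norm_map_of_mem_unitary hQ.two_mul_sub_one_mem_unitary)
      (norm_map_of_mem_unitary hR.two_mul_sub_one_mem_unitary)

end OperatorTriangle

section Variation

theorem eVariationOn_Icc_le_of_lipschitzOnWith {E : Type*} [PseudoEMetricSpace E] {f : ℝ → E}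
    {C : ℝ≥0} {a b : ℝ} (hf : LipschitzOnWith C f (Icc a b)) :
    eVariationOn f (Icc a b) ≤ C * ENNReal.ofReal (b - a) :=
  calc
    eVariationOn (f ∘ id) (Icc a b) ≤ C * eVariationOn id (Icc a b) :=
      hf.comp_eVariationOn_le (mapsTo_id _)
    _ = C * ENNReal.ofReal (b - a) := by rw [eVariationOn_id_Icc]

theorem exists_monotone_forall_edist_lt {E : Type*} [PseudoEMetricSpace E] {γ : ℝ → E}
    {a b : ℝ} (hab : a ≤ b) (hγ : ContinuousOn γ (Icc a b)) {δ : ℝ≥0∞} (hδ : 0 < δ) :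
    ∃ (t : ℕ → ℝ) (n : ℕ), Monotone t ∧ (∀ i, t i ∈ Icc a b) ∧ t 0 = a ∧ t n = b ∧
      ∀ i, edist (γ (t (i + 1))) (γ (t i)) < δ := by
  let U (x : Icc a b) : Set (Icc a b) := (Icc a b).domRestrict γ ⁻¹' Metric.eball (γ x) (δ / 2)
  have hU (x) : IsOpen (U x) := Metric.isOpen_eball.preimage hγ.domRestrict
  obtain ⟨t, ht0, htmono, ⟨n, htn⟩, htU⟩ := exists_monotone_Icc_subset_open_cover_Icc hab hU
    fun x _ ↦ mem_iUnion.2 ⟨x, Metric.mem_eball_self (ENNReal.half_pos hδ.ne')⟩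
  refine ⟨fun i ↦ t i, n, fun i j hij ↦ htmono hij, fun i ↦ (t i).2, ht0, htn n le_rfl,
    fun i ↦ ?_⟩
  obtain ⟨x, hx⟩ := htU i
  have hti : t i ≤ t (i + 1) := htmono i.le_succ
  have hleft : edist (γ (t i)) (γ x) < δ / 2 := hx (left_mem_Icc.2 hti)
  have hright : edist (γ (t (i + 1))) (γ x) < δ / 2 := hx (right_mem_Icc.2 hti)
  calc
    edist (γ (t (i + 1))) (γ (t i)) ≤ edist (γ (t (i + 1))) (γ x) + edist (γ (t i)) (γ x) :=
      edist_triangle_right _ _ _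
    _ < δ / 2 + δ / 2 := ENNReal.add_lt_add hright hleft
    _ = δ := ENNReal.add_halves δ

theorem le_mul_eVariationOn_of_locally_le_mul_edist {E : Type*} [PseudoEMetricSpace E]
    {γ : ℝ → E} {a b : ℝ} (hab : a ≤ b) (hγ : ContinuousOn γ (Icc a b)) {d : E → E → ℝ≥0∞}
    (htri : ∀ r ∈ Icc a b, ∀ s ∈ Icc a b, ∀ t ∈ Icc a b,
      d (γ r) (γ t) ≤ d (γ r) (γ s) + d (γ s) (γ t))
    {c δ : ℝ≥0∞} (hδ : 0 < δ) (hd : ∀ x y, edist x y < δ → d x y ≤ c * edist x y) :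
    d (γ a) (γ b) ≤ c * eVariationOn γ (Icc a b) := by
  obtain ⟨t, n, htmono, htmem, rfl, rfl, htδ⟩ := exists_monotone_forall_edist_lt hab hγ hδ
  have hchain (k : ℕ) : d (γ (t 0)) (γ (t k)) ≤
      c * ∑ i ∈ Finset.range k, edist (γ (t (i + 1))) (γ (t i)) := by
    induction k with
    | zero => simpa using hd (γ (t 0)) (γ (t 0)) (by simpa using hδ)
    | succ k ih =>
      have hstep := hd (γ (t k)) (γ (t (k + 1))) (edist_comm (γ (t k)) _ ▸ htδ k)
      rw [Finset.sum_range_succ, mul_add, edist_comm (γ (t (k + 1)))]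
      exact (htri _ (htmem 0) _ (htmem k) _ (htmem (k + 1))).trans (add_le_add ih hstep)
  exact (hchain n).trans (by gcongr; exact eVariationOn.sum_le htmono htmem)

theorem eventually_arcsin_le_mul {c : ℝ} (hc : 1 < c) :
    ∀ᶠ x in 𝓝[≥] (0 : ℝ), Real.arcsin x ≤ c * x := by
  have hderiv : HasDerivAt Real.arcsin 1 0 := by
    simpa using Real.hasDerivAt_arcsin (x := 0) (by norm_num) (by norm_num)
  have hsmall := (hasDerivAt_iff_isLittleO.1 hderiv).def (sub_pos.2 hc)
  filter_upwards [nhdsWithin_le_nhds hsmall, self_mem_nhdsWithin] with x hx (hx0 : 0 ≤ x)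
  simp only [Real.arcsin_zero, sub_zero, smul_eq_mul, mul_one, Real.norm_eq_abs,
    abs_of_nonneg hx0] at hx
  linarith [le_of_abs_le hx]

theorem exists_pos_forall_ofReal_arcsin_le_mul_edist {E : Type*} [SeminormedAddCommGroup E]
    {c : ℝ≥0} (hc : 1 < c) :
    ∃ δ : ℝ≥0∞, 0 < δ ∧ ∀ x y : E, edist x y < δ →
      ENNReal.ofReal (Real.arcsin ‖x - y‖) ≤ c * edist x y := by
  obtain ⟨δ, hδ, hsub⟩ := mem_nhdsGE_iff_exists_Ico_subset.1
    (eventually_arcsin_le_mul (NNReal.coe_lt_coe.2 hc))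
  refine ⟨ENNReal.ofReal δ, ENNReal.ofReal_pos.2 hδ, fun x y hxy ↦ ?_⟩
  rw [edist_dist, ENNReal.ofReal_lt_ofReal_iff hδ, dist_eq_norm] at hxy
  rw [edist_dist, dist_eq_norm, ← ENNReal.ofReal_coe_nnreal, ← ENNReal.ofReal_mul c.coe_nonneg]
  exact ENNReal.ofReal_le_ofReal (hsub ⟨norm_nonneg _, hxy⟩)

theorem ofReal_arcsin_norm_sub_le_eVariationOn {E : Type*} [SeminormedAddCommGroup E]
    {γ : ℝ → E} {a b : ℝ} (hab : a ≤ b) (hγ : ContinuousOn γ (Icc a b))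
    (htri : ∀ r ∈ Icc a b, ∀ s ∈ Icc a b, ∀ t ∈ Icc a b,
      Real.arcsin ‖γ r - γ t‖ ≤ Real.arcsin ‖γ r - γ s‖ + Real.arcsin ‖γ s - γ t‖) :
    ENNReal.ofReal (Real.arcsin ‖γ a - γ b‖) ≤ eVariationOn γ (Icc a b) := by
  have hbound (c : ℝ≥0) (hc : 1 < c) :
      ENNReal.ofReal (Real.arcsin ‖γ a - γ b‖) ≤ c * eVariationOn γ (Icc a b) := by
    obtain ⟨δ, hδ, hd⟩ := exists_pos_forall_ofReal_arcsin_le_mul_edist (E := E) hc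
    refine le_mul_eVariationOn_of_locally_le_mul_edist hab hγ
      (d := fun x y ↦ ENNReal.ofReal (Real.arcsin ‖x - y‖)) (fun r hr s hs t ht ↦ ?_) hδ hd
    exact (ENNReal.ofReal_le_ofReal (htri r hr s hs t ht)).trans ENNReal.ofReal_add_le
  have hlim : Tendsto (fun c : ℝ≥0 ↦ c * eVariationOn γ (Icc a b)) (𝓝[>] 1)
      (𝓝 (eVariationOn γ (Icc a b))) := by
    have : Tendsto (fun c : ℝ≥0 ↦ (c : ℝ≥0∞)) (𝓝[>] 1) (𝓝 1) :=
      (ENNReal.continuous_coe.tendsto 1).mono_left nhdsWithin_le_nhds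
    simpa using ENNReal.Tendsto.mul_const this (.inl one_ne_zero)
  exact ge_of_tendsto hlim (eventually_mem_nhdsWithin.mono hbound)

end Variation

section UnitaryPath

open selfAdjoint Unitary

variable {A : Type*} [CStarAlgebra A]

theorem norm_expUnitary_sub_one_eq_two_mul_sin {x : selfAdjoint A} (hx : ‖x‖ ≤ Real.pi) :
    ‖(expUnitary x - 1 : A)‖ = 2 * Real.sin (‖x‖ / 2) :=
  eq_two_mul_sin_half_of_sq_eq (norm_nonneg _) (norm_nonneg _) (by linarith [Real.pi_pos])
    (norm_sq_expUnitary_sub_one hx)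

theorem expUnitary_neg (x : selfAdjoint A) : expUnitary (-x) = star (expUnitary x) := by
  rw [star_eq_inv, eq_inv_iff_mul_eq_one, ← Commute.expUnitary_add (by simp), neg_add_cancel,
    expUnitary_zero]

theorem expUnitary_smul_mul_star_expUnitary_smul (x : selfAdjoint A) (s t : ℝ) :
    expUnitary (s • x) * star (expUnitary (t • x)) = expUnitary ((s - t) • x) := by
  rw [← expUnitary_neg, ← Commute.expUnitary_add, sub_smul, sub_eq_add_neg]
  simp [Commute.smul_left, Commute.smul_right]

theorem norm_expUnitary_smul_sub_expUnitary_smul {x : selfAdjoint A} {s t : ℝ}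
    (h : |s - t| * ‖x‖ ≤ Real.pi) :
    ‖(expUnitary (s • x) - expUnitary (t • x) : A)‖ = 2 * Real.sin (|s - t| * (‖x‖ / 2)) := by
  have hnorm : ‖(s - t) • x‖ = |s - t| * ‖x‖ := norm_smul (s - t) (x : A)
  rw [Unitary.norm_sub_eq, expUnitary_smul_mul_star_expUnitary_smul,
    norm_expUnitary_sub_one_eq_two_mul_sin (hnorm ▸ h), hnorm, mul_div_assoc]

theorem norm_argSelfAdjoint_lt_pi {u : unitary A} (hu : ‖(u - 1 : A)‖ < 2) :
    ‖argSelfAdjoint u‖ < Real.pi :=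
  mem_ball_zero_iff.1 (Unitary.openPartialHomeomorph.map_source (by
    simpa [Unitary.openPartialHomeomorph, Subtype.dist_eq, dist_eq_norm] using hu))

theorem half_norm_argSelfAdjoint_eq_arcsin {u : unitary A} (hu : ‖(u - 1 : A)‖ < 2) :
    ‖argSelfAdjoint u‖ / 2 = Real.arcsin (‖(u - 1 : A)‖ / 2) := by
  have h0 := norm_nonneg (argSelfAdjoint u)
  have hpi := norm_argSelfAdjoint_le_pi u
  conv_rhs => rw [← expUnitary_argSelfAdjoint hu, norm_expUnitary_sub_one_eq_two_mul_sin hpi]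
  rw [mul_div_cancel_left₀ _ two_ne_zero, Real.arcsin_sin] <;> linarith

theorem argSelfAdjoint_star {u : unitary A} (hu : ‖(u - 1 : A)‖ < 2) :
    argSelfAdjoint (star u) = -argSelfAdjoint u := by
  conv_lhs => rw [← expUnitary_argSelfAdjoint hu, ← expUnitary_neg]
  exact argSelfAdjoint_expUnitary (norm_neg (argSelfAdjoint u) ▸ norm_argSelfAdjoint_lt_pi hu)

theorem coe_argSelfAdjoint_conj (w : unitary A) {u : unitary A} (hu : ‖(u - 1 : A)‖ < 2) :
    (argSelfAdjoint (w * u * star w) : A) = w * argSelfAdjoint u * star w := by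
  have harg : ContinuousOn (fun z : ℂ ↦ (z.arg : ℂ)) (spectrum ℂ (u : A)) :=
    Complex.continuous_ofReal.comp_continuousOn <| Complex.continuousOn_arg.mono <|
      (spectrum_subset_slitPlane_iff_norm_lt_two u.2).2 hu
  exact (StarAlgHomClass.map_cfc (conjStarAlgAut ℂ A w) _ (u : A) harg
    (show Continuous fun x : A ↦ (w * x * star w : A) by fun_prop)).symm

theorem expUnitary_conj_of_conj_eq_neg {w : unitary A} {x : selfAdjoint A}
    (h : (w * x * star w : A) = -x) : w * expUnitary x * star w = star (expUnitary x) := by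
  let +nondep : NormedAlgebra ℚ A := .restrictScalars ℚ ℂ A
  rw [← expUnitary_neg]
  ext
  calc
    (w * expUnitary x * star w : A) = NormedSpace.exp (w * (Complex.I • (x : A)) * star w) :=
      (NormedSpace.exp_units_conj (toUnits w) _).symm
    _ = expUnitary (-x) := by
      rw [mul_smul_comm, smul_mul_assoc, h, expUnitary_coe, NegMemClass.coe_neg]

theorem isSelfAdjoint_expUnitary_smul_mul {u w : unitary A} (hw : IsSelfAdjoint w)
    (hu : ‖(u - 1 : A)‖ < 2) (h : w * u * star w = star u) (r : ℝ) :
    IsSelfAdjoint (expUnitary (r • argSelfAdjoint u) * w) := by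
  have hneg : (w * (r • argSelfAdjoint u : selfAdjoint A) * star w : A) =
      -(r • argSelfAdjoint u : selfAdjoint A) := by
    rw [selfAdjoint.val_smul, mul_smul_comm, smul_mul_assoc, ← coe_argSelfAdjoint_conj w hu,
      h, argSelfAdjoint_star hu, NegMemClass.coe_neg, smul_neg]
  have hexp := expUnitary_conj_of_conj_eq_neg hneg
  rw [isSelfAdjoint_iff, star_mul, ← hexp, mul_assoc w, ← mul_assoc, Unitary.star_mul_self,
    one_mul, hw.star_eq]

theorem exists_selfAdjoint_unitary_path {u v : unitary A} (hu : IsSelfAdjoint u)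
    (hv : IsSelfAdjoint v) (huv : ‖(u - v : A)‖ < 2) :
    ∃ γ : ℝ → unitary A, γ 0 = u ∧ γ 1 = v ∧ (∀ t, IsSelfAdjoint (γ t)) ∧
      ∀ s ∈ Icc (0 : ℝ) 1, ∀ t ∈ Icc (0 : ℝ) 1,
        ‖(γ s - γ t : A)‖ = 2 * Real.sin (|s - t| * Real.arcsin (‖(u - v : A)‖ / 2)) := by
  have hnorm : ‖((v * star u : unitary A) - 1 : A)‖ = ‖(u - v : A)‖ := by
    rw [← Unitary.norm_sub_eq, norm_sub_rev]
  have hlt := hnorm.trans_lt huv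
  have hconj : u * (v * star u) * star u = star (v * star u) := by
    have huu : u * u = 1 := by simpa only [hu.star_eq] using Unitary.mul_star_self u
    rw [star_mul, star_star, hu.star_eq, hv.star_eq, mul_assoc, mul_assoc, huu, mul_one]
  set a := argSelfAdjoint (v * star u)
  refine ⟨fun t ↦ expUnitary (t • a) * u, by simp, ?_,
    isSelfAdjoint_expUnitary_smul_mul hu hlt hconj, fun s hs t ht ↦ ?_⟩
  · simp [a, expUnitary_argSelfAdjoint hlt, mul_assoc]
  · have hst : |s - t| ≤ 1 := Real.dist_le_of_mem_Icc_01 hs ht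
    have hpi : |s - t| * ‖a‖ ≤ Real.pi :=
      (mul_le_of_le_one_left (norm_nonneg _) hst).trans (norm_argSelfAdjoint_le_pi _)
    rw [← hnorm, ← half_norm_argSelfAdjoint_eq_arcsin hlt,
      ← norm_expUnitary_smul_sub_expUnitary_smul hpi]
    simp [← sub_mul]

theorem isStarProjection_half_smul_one_add {R : Type*} [Ring R] [StarRing R] [Algebra ℝ R]
    [StarModule ℝ R] {w : unitary R} (hw : IsSelfAdjoint w) :
    IsStarProjection ((1 / 2 : ℝ) • (1 + w : R)) := by
  have hww : (w * w : R) = 1 := by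
    simpa only [hw.star_eq, Submonoid.coe_mul, OneMemClass.coe_one] using
      congrArg Subtype.val (Unitary.mul_star_self w)
  refine ⟨?_, .smul (.all _) ((IsSelfAdjoint.one R).add (congrArg Subtype.val hw.star_eq))⟩
  simp only [IsIdempotentElem, mul_add, add_mul, smul_mul_smul_comm, hww, mul_one, one_mul]
  module

theorem exists_isStarProjection_path {p q : A} (hp : IsStarProjection p) (hq : IsStarProjection q)
    (hpq : ‖p - q‖ < 1) :
    ∃ γ : ℝ → A, γ 0 = p ∧ γ 1 = q ∧ (∀ t, IsStarProjection (γ t)) ∧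
      ∀ s ∈ Icc (0 : ℝ) 1, ∀ t ∈ Icc (0 : ℝ) 1,
        ‖γ s - γ t‖ = Real.sin (|s - t| * Real.arcsin ‖p - q‖) := by
  let reflection {e : A} (he : IsStarProjection e) : unitary A :=
    ⟨2 * e - 1, he.two_mul_sub_one_mem_unitary⟩
  have hrefl {e : A} (he : IsStarProjection e) : IsSelfAdjoint (reflection he) := by
    ext
    simp [reflection, two_mul, he.isSelfAdjoint.star_eq]
  have hdist : ‖(reflection hp - reflection hq : A)‖ = 2 * ‖p - q‖ :=
    norm_two_mul_sub_one_sub_two_mul_sub_one p q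
  obtain ⟨γ, hγ0, hγ1, hγ, hγnorm⟩ := exists_selfAdjoint_unitary_path (hrefl hp) (hrefl hq)
    (by rw [hdist]; linarith)
  rw [hdist, mul_div_cancel_left₀ _ two_ne_zero] at hγnorm
  refine ⟨fun t ↦ (1 / 2 : ℝ) • (1 + γ t : A), ?_, ?_,
    fun t ↦ isStarProjection_half_smul_one_add (hγ t), fun s hs t ht ↦ ?_⟩
  · simp only [hγ0, reflection, two_mul]
    module
  · simp only [hγ1, reflection, two_mul]
    module
  · rw [← smul_sub, add_sub_add_left_eq_sub, norm_smul, hγnorm s hs t ht,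
      Real.norm_of_nonneg (by norm_num)]
    ring

end UnitaryPath

section LengthMetric

variable {H : Type*} [NormedAddCommGroup H] [InnerProductSpace ℂ H] [CompleteSpace H]

theorem isOrthogonalProjection_iff_isStarProjection {P : H →L[ℂ] H} :
    IsOrthogonalProjection P ↔ IsStarProjection P :=
  and_comm.trans (isStarProjection_iff P).symm

theorem ofReal_arcsin_norm_sub_le_projLengthMetric (P Q : H →L[ℂ] H) :
    ENNReal.ofReal (Real.arcsin ‖P - Q‖) ≤ projLengthMetric P Q := by
  refine le_iInf₂ fun γ hγ ↦ le_iInf₂ fun hproj hγ0 ↦ le_iInf fun hγ1 ↦ ?_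
  subst hγ0 hγ1
  have hstar (t) (ht : t ∈ Icc (0 : ℝ) 1) : IsStarProjection (γ t) :=
    isOrthogonalProjection_iff_isStarProjection.1 (hproj t ht)
  exact ofReal_arcsin_norm_sub_le_eVariationOn zero_le_one hγ fun r hr s hs t ht ↦
    arcsin_norm_sub_triangle_of_isStarProjection (hstar r hr) (hstar s hs) (hstar t ht)

theorem projLengthMetric_le_of_lipschitzOnWith {γ : ℝ → H →L[ℂ] H} {C : ℝ≥0} {s t : ℝ}
    (hγ : LipschitzOnWith C γ (uIcc s t)) (hproj : ∀ r ∈ uIcc s t, IsOrthogonalProjection (γ r)) :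
    projLengthMetric (γ s) (γ t) ≤ C * edist s t := by
  have hmaps : MapsTo (AffineMap.lineMap s t : ℝ → ℝ) (Icc 0 1) (uIcc s t) := by
    rw [← segment_eq_uIcc, segment_eq_image_lineMap]
    exact mapsTo_image _ _
  have hlip : LipschitzOnWith (C * nndist s t) (γ ∘ AffineMap.lineMap s t) (Icc (0 : ℝ) 1) :=
    hγ.comp (lipschitzWith_lineMap s t).lipschitzOnWith hmaps
  calc
    projLengthMetric (γ s) (γ t) ≤ eVariationOn (γ ∘ AffineMap.lineMap s t) (Icc (0 : ℝ) 1) :=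
      iInf₂_le_of_le _ hlip.continuousOn <| iInf₂_le_of_le (fun r hr ↦ hproj _ (hmaps hr))
        (by simp) <| iInf_le _ (by simp)
    _ ≤ C * edist s t := by
      simpa only [ENNReal.coe_mul, ← edist_nndist, sub_zero, ENNReal.ofReal_one, mul_one] using
        eVariationOn_Icc_le_of_lipschitzOnWith hlip

theorem exists_path_projLengthMetric_eq {P Q : H →L[ℂ] H} (hP : IsOrthogonalProjection P)
    (hQ : IsOrthogonalProjection Q) (hPQ : ‖P - Q‖ < 1) :
    ∃ γ : ℝ → H →L[ℂ] H, γ 0 = P ∧ γ 1 = Q ∧ (∀ t, IsOrthogonalProjection (γ t)) ∧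
      ∀ s ∈ Icc (0 : ℝ) 1, ∀ t ∈ Icc (0 : ℝ) 1,
        projLengthMetric (γ s) (γ t) = ENNReal.ofReal (|s - t| * Real.arcsin ‖P - Q‖) := by
  obtain ⟨γ, hγ0, hγ1, hproj, hnorm⟩ := exists_isStarProjection_path
    (isOrthogonalProjection_iff_isStarProjection.1 hP)
    (isOrthogonalProjection_iff_isStarProjection.1 hQ) hPQ
  simp only [← isOrthogonalProjection_iff_isStarProjection] at hproj
  set θ := Real.arcsin ‖P - Q‖
  have hθ : 0 ≤ θ := Real.arcsin_nonneg.2 (norm_nonneg _)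
  have hlip : LipschitzOnWith θ.toNNReal γ (Icc 0 1) := by
    refine .of_dist_le_mul fun s hs t ht ↦ ?_
    rw [dist_eq_norm, hnorm s hs t ht, Real.coe_toNNReal _ hθ, Real.dist_eq, mul_comm θ]
    exact Real.sin_le (by positivity)
  refine ⟨γ, hγ0, hγ1, hproj, fun s hs t ht ↦ le_antisymm ?_ ?_⟩
  · refine (projLengthMetric_le_of_lipschitzOnWith
      (hlip.mono (uIcc_subset_Icc hs ht)) fun r _ ↦ hproj r).trans_eq ?_
    rw [edist_dist, Real.dist_eq, mul_comm, ENNReal.ofReal_mul (abs_nonneg _)]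
    rfl
  · have hst : |s - t| ≤ 1 := Real.dist_le_of_mem_Icc_01 hs ht
    have hle : |s - t| * θ ≤ Real.pi / 2 :=
      (mul_le_of_le_one_left hθ hst).trans (Real.arcsin_le_pi_div_two _)
    have hge : -(Real.pi / 2) ≤ |s - t| * θ := by
      linarith [Real.pi_pos, mul_nonneg (abs_nonneg (s - t)) hθ]
    simpa only [hnorm s hs t ht, Real.arcsin_sin hge hle] using
      ofReal_arcsin_norm_sub_le_projLengthMetric (γ s) (γ t)

theorem projLengthMetric_eq_ofReal_arcsin_norm_sub {P Q : H →L[ℂ] H}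
    (hP : IsOrthogonalProjection P) (hQ : IsOrthogonalProjection Q) (hPQ : ‖P - Q‖ < 1) :
    projLengthMetric P Q = ENNReal.ofReal (Real.arcsin ‖P - Q‖) := by
  obtain ⟨γ, rfl, rfl, -, hγ⟩ := exists_path_projLengthMetric_eq hP hQ hPQ
  simpa using hγ 0 (by simp) 1 (by simp)

theorem projLengthMetric_pi_div_two_geodesic_general (P Q : H →L[ℂ] H)
    (hP : IsOrthogonalProjection P) (hQ : IsOrthogonalProjection Q)
    (hPQ : projLengthMetric P Q < ENNReal.ofReal (Real.pi / 2)) :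
    ∃ γ : ℝ → (H →L[ℂ] H),
      γ 0 = P ∧ γ ((projLengthMetric P Q).toReal) = Q ∧
      (∀ t ∈ Set.Icc (0:ℝ) ((projLengthMetric P Q).toReal), IsOrthogonalProjection (γ t)) ∧
      ∀ s ∈ Set.Icc (0:ℝ) ((projLengthMetric P Q).toReal),
        ∀ t ∈ Set.Icc (0:ℝ) ((projLengthMetric P Q).toReal),
          projLengthMetric (γ s) (γ t) = ENNReal.ofReal |s - t| := by
  have hlt : ‖P - Q‖ < 1 := Real.arcsin_lt_pi_div_two.1 <|
    (ENNReal.ofReal_lt_ofReal_iff (by positivity)).1 <|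
      (ofReal_arcsin_norm_sub_le_projLengthMetric P Q).trans_lt hPQ
  have hθ : 0 ≤ Real.arcsin ‖P - Q‖ := Real.arcsin_nonneg.2 (norm_nonneg _)
  obtain ⟨γ, hγ0, hγ1, hproj, hγ⟩ := exists_path_projLengthMetric_eq hP hQ hlt
  rw [projLengthMetric_eq_ofReal_arcsin_norm_sub hP hQ hlt, ENNReal.toReal_ofReal hθ]
  set θ := Real.arcsin ‖P - Q‖ with hθ_def
  refine ⟨fun t ↦ γ (t / θ), by simpa using hγ0, ?_, fun t _ ↦ hproj _, fun s hs t ht ↦ ?_⟩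
  · rcases hθ.eq_or_lt with h0 | hpos
    · have hPQ0 : P = Q := by
        rw [← sub_eq_zero, ← norm_eq_zero, ← Real.arcsin_eq_zero_iff, ← hθ_def, h0]
      simp [← h0, hγ0, hPQ0]
    · simp only [div_self hpos.ne', hγ1]
  · have hmem {r : ℝ} (hr : r ∈ Icc 0 θ) : r / θ ∈ Icc (0 : ℝ) 1 :=
      ⟨div_nonneg hr.1 hθ, div_le_one_of_le₀ hr.2 hθ⟩
    rw [hγ _ (hmem hs) _ (hmem ht), ← sub_div, abs_div, abs_of_nonneg hθ, div_mul_cancel_of_imp]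
    exact fun h0 ↦ abs_eq_zero.2 (by linarith [hs.1, hs.2, ht.1, ht.2])

end LengthMetric

/-- The space of orthogonal projections with the length metric `ρ` is
`(π/2)`-geodesic: if `ρ(P,Q) < π/2` then there is a geodesic path joining `P` to `Q`. -/
theorem projLengthMetric_pi_div_two_geodesic {H : Type*} [NormedAddCommGroup H]
    [InnerProductSpace ℂ H] [CompleteSpace H] [TopologicalSpace.SeparableSpace H]
    (P Q : H →L[ℂ] H)
    (hP : IsOrthogonalProjection P) (hQ : IsOrthogonalProjection Q)
    (hPQ : projLengthMetric P Q < ENNReal.ofReal (Real.pi / 2)) :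
    ∃ γ : ℝ → (H →L[ℂ] H),
      γ 0 = P ∧ γ ((projLengthMetric P Q).toReal) = Q ∧
      (∀ t ∈ Set.Icc (0:ℝ) ((projLengthMetric P Q).toReal), IsOrthogonalProjection (γ t)) ∧
      ∀ s ∈ Set.Icc (0:ℝ) ((projLengthMetric P Q).toReal),
        ∀ t ∈ Set.Icc (0:ℝ) ((projLengthMetric P Q).toReal),
          projLengthMetric (γ s) (γ t) = ENNReal.ofReal |s - t| := by
  exact projLengthMetric_pi_div_two_geodesic_general P Q hP hQ hPQ
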